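/- Let p be a prime and k an odd positive integer with gcd(k, p(p−1)) = 1, and let φ denote Euler's totient function. Then for every t ≥ 1, k divides p^{φ(k)t} − 1 and Spec(Γ(k, p^{φ(k)t})) ⊆ ℤ, where Γ(k, p^{φ(k)t}) is the generalized Paley graph over the field GaloisField p (φ(k)·t) with p^{φ(k)t} elements. -/

import Mathlib

open scoped Classical

noncomputable instance (p n : ℕ) [Fact p.Prime] : Fintype (GaloisField p n) :=
  Fintype.ofFinite _

/-!
The characters of a finite abelian group `G` form a basis of eigenvectors of every matrix
`(f (x - y))` indexed by `G`, and the eigenvalues are the character sums `∑ z, f z * ψ⁻¹ z`.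
If `G` is a vector space over a finite field `K` and the integer-valued `f` is invariant under
multiplication by `Kˣ`, then averaging over `Kˣ` and orthogonality of characters on the lines of `G`
show that `|K| - 1` times such a sum is an integer; the sum is therefore rational, and being an
algebraic integer it is an integer. For the nonzero `k`-th powers the invariance holds as soon as
`k` is coprime to `|K| - 1`, because then every element of `Kˣ` is itself a `k`-th power.
-/

open Matrix

section Spectrum

theorem spectrum_eq_range_of_apply_basis {ι K M : Type*} [Finite ι] [Field K] [AddCommGroup M]
    [Module K M] (T : Module.End K M) (b : Module.Basis ι K M) (d : ι → K)
    (hT : ∀ i, T (b i) = d i • b i) : spectrum K T = Set.range d := by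
  have := Fintype.ofFinite ι
  have hdiag : LinearMap.toMatrix b b T = diagonal d := by
    ext i j
    obtain rfl | hij := eq_or_ne i j
    · simp [LinearMap.toMatrix_apply, hT]
    · simp [LinearMap.toMatrix_apply, hT, hij]
  rw [← LinearMap.spectrum_toMatrix T b, hdiag, spectrum_diagonal]

variable {G : Type*} [AddCommGroup G] [Fintype G]

theorem circulant_mulVec_addChar {R : Type*} [CommRing R] (f : G → R) (ψ : AddChar G R) :
    circulant f *ᵥ ψ = (∑ z, f z * ψ⁻¹ z) • ⇑ψ := by
  ext x
  calc ∑ y, f (x - y) * ψ y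
      = ∑ z, f z * ψ (x - z) := by
        rw [← Equiv.sum_comp (Equiv.subLeft x)]
        simp
    _ = (∑ z, f z * ψ⁻¹ z) * ψ x := by
        simp only [Finset.sum_mul, sub_eq_neg_add, AddChar.map_add_eq_mul, AddChar.inv_apply,
          mul_assoc]

theorem spectrum_circulant [DecidableEq G] (f : G → ℂ) :
    spectrum ℂ (circulant f) = Set.range fun ψ : AddChar G ℂ ↦ ∑ z, f z * ψ⁻¹ z := by
  rw [← spectrum_toLin']
  refine spectrum_eq_range_of_apply_basis _ (AddChar.complexBasis G) _ fun ψ ↦ ?_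
  rw [AddChar.complexBasis_apply, toLin'_apply, circulant_mulVec_addChar]

end Spectrum

section CharacterSums

theorem isIntegral_addChar_apply {G R : Type*} [AddGroup G] [Finite G] [CommRing R]
    (ψ : AddChar G R) (x : G) : IsIntegral ℤ (ψ x) := by
  refine .of_pow (addOrderOf_pos x) ?_
  rw [← AddChar.map_nsmul_eq_pow, addOrderOf_nsmul_eq_zero, AddChar.map_zero_eq_one]
  exact isIntegral_one

theorem mem_range_intCast_of_intCast_mul_mem {E : Type*} [Field E] [CharZero E] {x : E}
    (hx : IsIntegral ℤ x) {n : ℤ} (hn : n ≠ 0) (hnx : n * x ∈ (Int.castRingHom E).range) :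
    x ∈ (Int.castRingHom E).range := by
  obtain ⟨m, hm⟩ := hnx
  have hrat : x = ((m / n : ℚ) : E) := by
    push_cast
    rw [eq_div_iff (Int.cast_ne_zero.mpr hn), mul_comm, ← hm, eq_intCast]
  obtain ⟨z, rfl⟩ := hx.exists_int_iff_exists_rat.mp ⟨_, hrat⟩
  exact ⟨z, rfl⟩

theorem sum_addChar_smul_mem_range {K V R : Type*} [Ring K] [Fintype K] [AddCommGroup V]
    [Module K V] [CommRing R] [IsDomain R] (ψ : AddChar V R) (v : V) :
    ∑ c : K, ψ (c • v) ∈ (Int.castRingHom R).range := by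
  let χ : AddChar K R := ψ.compAddMonoidHom (LinearMap.toSpanSingleton K V v).toAddMonoidHom
  change ∑ c, χ c ∈ _
  rw [AddChar.sum_eq_ite]
  split_ifs
  exacts [natCast_mem _ _, zero_mem _]

theorem sum_mul_comp_smul {M X R : Type*} [Group M] [MulAction M X] [Fintype X]
    [NonUnitalNonAssocSemiring R] (c : M) {f : X → R} (hf : ∀ x, f (c • x) = f x) (g : X → R) :
    ∑ x, f x * g (c • x) = ∑ x, f x * g x := by
  rw [← Equiv.sum_comp (MulAction.toPerm c) fun x ↦ f x * g x]
  simp only [MulAction.toPerm_apply, hf]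

variable {K V : Type*} [Field K] [AddCommGroup V] [Module K V] [Fintype V]

theorem card_sub_one_mul_sum_mul_addChar [Fintype K] {R : Type*} [CommRing R] {f : V → R}
    (hf : ∀ c : K, c ≠ 0 → ∀ v, f (c • v) = f v) (ψ : AddChar V R) :
    ((Fintype.card K : R) - 1) * ∑ v, f v * ψ v
      = ∑ v, f v * ∑ c : K, ψ (c • v) - ∑ v, f v := by
  have hswap : ∑ v, f v * ∑ c : K, ψ (c • v) = ∑ c : K, ∑ v, f v * ψ (c • v) := by
    simp only [Finset.mul_sum]
    exact Finset.sum_comm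
  have hunits : ∑ c ∈ Finset.univ.erase (0 : K), ∑ v, f v * ψ (c • v)
      = ((Fintype.card K : R) - 1) * ∑ v, f v * ψ v := by
    rw [Finset.sum_congr rfl fun c hc ↦
      have hc0 := Finset.ne_of_mem_erase hc
      sum_mul_comp_smul (Units.mk0 c hc0) (hf c hc0) ψ]
    simp [Nat.cast_sub Fintype.card_pos]
  rw [hswap, ← Finset.add_sum_erase _ _ (Finset.mem_univ (0 : K)), hunits]
  simp

variable [Finite K]

theorem sum_intCast_mul_addChar_mem_range {E : Type*} [Field E] [CharZero E] {f : V → ℤ}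
    (hf : ∀ c : K, c ≠ 0 → ∀ v, f (c • v) = f v) (ψ : AddChar V E) :
    ∑ v, (f v : E) * ψ v ∈ (Int.castRingHom E).range := by
  have := Fintype.ofFinite K
  have hint : IsIntegral ℤ (∑ v, (f v : E) * ψ v) :=
    .sum _ fun v _ ↦ isIntegral_algebraMap.mul (isIntegral_addChar_apply ψ v)
  have hcard : (Fintype.card K : ℤ) - 1 ≠ 0 := by
    have := Fintype.one_lt_card (α := K)
    lia
  refine mem_range_intCast_of_intCast_mul_mem hint hcard ?_
  push_cast
  rw [card_sub_one_mul_sum_mul_addChar (fun c hc v ↦ by rw [hf c hc v]) ψ]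
  exact sub_mem
    (sum_mem fun v _ ↦ mul_mem (intCast_mem _ _) (sum_addChar_smul_mem_range ψ v))
    (sum_mem fun v _ ↦ intCast_mem _ _)

theorem spectrum_circulant_intCast_subset [DecidableEq V] {f : V → ℤ}
    (hf : ∀ c : K, c ≠ 0 → ∀ v, f (c • v) = f v) :
    spectrum ℂ (circulant fun v ↦ (f v : ℂ)) ⊆ Set.range ((↑) : ℤ → ℂ) := by
  rw [spectrum_circulant]
  rintro _ ⟨ψ, rfl⟩
  exact sum_intCast_mul_addChar_mem_range hf ψ⁻¹

end CharacterSums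

section NonzeroPowers

/-- The set of `k`-th powers of nonzero elements of `F`, written `R_k` in the paper: the connection
set of the generalized Paley graph. -/
def nonzeroPowers (F : Type*) [MonoidWithZero F] (k : ℕ) : Set F :=
  {x | ∃ z, z ≠ 0 ∧ z ^ k = x}

variable {K F : Type*} [Field K] [Ring F] [Algebra K F] {k : ℕ}

theorem exists_ne_zero_pow_eq_of_coprime (hk : k.Coprime (Nat.card K - 1)) {c : K}
    (hc : c ≠ 0) : ∃ d : K, d ≠ 0 ∧ d ^ k = c := by
  have hcop : (Nat.card Kˣ).Coprime k := by
    rw [Nat.card_units]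
    exact hk.symm
  obtain ⟨d, hd⟩ := (powCoprime hcop).surjective (Units.mk0 c hc)
  exact ⟨d, d.ne_zero, by simpa using congrArg Units.val hd⟩

theorem smul_mem_nonzeroPowers (hk : k.Coprime (Nat.card K - 1)) {c : K} (hc : c ≠ 0) {x : F}
    (hx : x ∈ nonzeroPowers F k) : c • x ∈ nonzeroPowers F k := by
  obtain ⟨z, hz, rfl⟩ := hx
  obtain ⟨d, hd, rfl⟩ := exists_ne_zero_pow_eq_of_coprime hk hc
  exact ⟨d • z, smul_ne_zero hd hz, smul_pow d z k⟩

theorem smul_mem_nonzeroPowers_iff (hk : k.Coprime (Nat.card K - 1)) {c : K} (hc : c ≠ 0)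
    {x : F} : c • x ∈ nonzeroPowers F k ↔ x ∈ nonzeroPowers F k := by
  refine ⟨fun h ↦ ?_, smul_mem_nonzeroPowers hk hc⟩
  simpa [smul_smul, inv_mul_cancel₀ hc] using smul_mem_nonzeroPowers hk (inv_ne_zero hc) h

end NonzeroPowers

theorem dvd_pow_totient_mul_sub_one {a k : ℕ} (h : a.Coprime k) (t : ℕ) :
    k ∣ a ^ (k.totient * t) - 1 := by
  rcases a.eq_zero_or_pos with rfl | ha
  · simp_all
  have hmod : a ^ (k.totient * t) ≡ 1 [MOD k] := by
    simpa [pow_mul] using (Nat.ModEq.pow_totient h).pow t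
  exact (Nat.modEq_iff_dvd' (Nat.one_le_pow _ _ ha)).mp hmod.symm

theorem gpGraph_integral_family_totient_general {K F : Type*} [Field K] [Finite K] [Ring F]
    [Algebra K F] [Fintype F] [DecidableEq F] {k : ℕ} (hk : k.Coprime (Nat.card K - 1))
    (A : Matrix F F ℂ) (hA : ∀ x y, A x y = if ∃ z, z ≠ 0 ∧ z ^ k = y - x then 1 else 0) :
    spectrum ℂ A ⊆ Set.range ((↑) : ℤ → ℂ) := by
  let f : F → ℤ := (nonzeroPowers F k).indicator 1
  have hf (c : K) (hc : c ≠ 0) (v : F) : f (c • v) = f v := by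
    simp only [f, Set.indicator_apply, smul_mem_nonzeroPowers_iff hk hc, Pi.one_apply]
  have hcirc : A = circulant fun v ↦ (f v : ℂ) := by
    ext x y
    have hneg : f (y - x) = f (x - y) := by
      simpa using hf (-1) (neg_ne_zero.mpr one_ne_zero) (x - y)
    rw [hA, circulant_apply, ← hneg]
    simp [f, Set.indicator_apply, nonzeroPowers]
  rw [hcirc]
  exact spectrum_circulant_intCast_subset hf

theorem gpGraph_integral_family_totient
    (p : ℕ) [Fact p.Prime] (k : ℕ) (hk : 0 < k) (hodd : Odd k)
    (hgcd : Nat.gcd k (p * (p - 1)) = 1) :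
    ∀ t : ℕ, 1 ≤ t →
      (k ∣ p ^ (Nat.totient k * t) - 1) ∧
      ∀ A : Matrix (GaloisField p (Nat.totient k * t))
          (GaloisField p (Nat.totient k * t)) ℂ,
        (∀ x y, A x y = if ∃ z, z ≠ 0 ∧ z ^ k = y - x then 1 else 0) →
        spectrum ℂ A ⊆ Set.range ((↑) : ℤ → ℂ) := by
  obtain ⟨hkp, hkp1⟩ := Nat.coprime_mul_iff_right.mp hgcd
  exact fun t _ ↦ ⟨dvd_pow_totient_mul_sub_one hkp.symm t, fun A hA ↦
    gpGraph_integral_family_totient_general (K := ZMod p) (by rwa [Nat.card_zmod]) A hA⟩
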